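/- arXiv:2407.03973 — 6 statements merged into one kernel-verified Lean document; each statement's English description precedes it below -/
import Mathlib

section
/- Let R be a commutative ring and c, d ∈ R. The fundamental sequence 0 → ann(c·d)/M → (ann(c)/(ann(c)·(d))) ⊕ (ann(d)/((c)·ann(d))) → H → ((c) ∩ (d))/(c·d) → 0 is exact, where the maps are α([r]) = ([d·r], [c·r]), β([f], [g]) = [f, g] ∈ H, and γ([f, g]) = [c·f] (which equals [d·g]). -/
open Submodule

section Core
variable (R : Type*) [CommRing R]

/-- The annihilator ideal of an element `c`: `{r : R | c * r = 0}`. -/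
def annI (c : R) : Ideal R := LinearMap.ker (LinearMap.lsmul R R c)

lemma mem_annI {R : Type*} [CommRing R] {c r : R} : r ∈ annI R c ↔ c * r = 0 := Iff.rfl

/-- `Z = {(f, g) | c * f = d * g}`. -/
def Zsub (c d : R) : Submodule R (R × R) where
  carrier := {p | c * p.1 = d * p.2}
  add_mem' := by
    rintro ⟨a1, a2⟩ ⟨b1, b2⟩ ha hb
    simp only [Set.mem_setOf_eq] at *
    simp [mul_add, ha, hb]
  zero_mem' := by simp
  smul_mem' := by
    rintro r ⟨p1, p2⟩ hp
    simp only [Set.mem_setOf_eq, Prod.smul_fst, Prod.smul_snd, smul_eq_mul] at *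
    rw [mul_left_comm, hp, mul_left_comm]

lemma mem_Zsub {R : Type*} [CommRing R] {c d f g : R} :
    (f, g) ∈ Zsub R c d ↔ c * f = d * g := Iff.rfl

/-- `B = {(d * r, c * r) | r ∈ R}`. -/
def Bsub (c d : R) : Submodule R (R × R) :=
  LinearMap.range ((LinearMap.lsmul R R d).prod (LinearMap.lsmul R R c))

/-- The homology `H = Z / B`. -/
abbrev Hmod (c d : R) := Zsub R c d ⧸ (Bsub R c d).comap (Zsub R c d).subtype

/-- The class `[f, g] ∈ H` of a pair `(f, g)` with `c * f = d * g`. -/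
def Hmk (c d : R) (f g : R) (h : c * f = d * g) : Hmod R c d :=
  Submodule.Quotient.mk ⟨(f, g), h⟩

/-- The submodule of `H` generated by horizontally pure classes `[f, 0]`. -/
def Hpureh (c d : R) : Submodule R (Hmod R c d) :=
  span R {h | ∃ f, ∃ hf : c * f = d * 0, h = Hmk R c d f 0 hf}

/-- The submodule of `H` generated by vertically pure classes `[0, g]`. -/
def Hpurev (c d : R) : Submodule R (Hmod R c d) :=
  span R {h | ∃ g, ∃ hg : c * 0 = d * g, h = Hmk R c d 0 g hg}

/-- The ideal `M = {r ∈ ann(cd) | ∃ f ∈ ann(c), g ∈ ann(d), rd = fd ∧ rc = gc}`. -/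
def Msub (c d : R) : Ideal R where
  carrier := {r | r ∈ annI R (c * d) ∧
    ∃ f ∈ annI R c, ∃ g ∈ annI R d, r * d = f * d ∧ r * c = g * c}
  zero_mem' := ⟨zero_mem _, 0, zero_mem _, 0, zero_mem _, by simp, by simp⟩
  add_mem' := by
    rintro a b ⟨ha, f, hf, g, hg, hfd, hgc⟩ ⟨hb, f', hf', g', hg', hfd', hgc'⟩
    exact ⟨add_mem ha hb, f + f', add_mem hf hf', g + g', add_mem hg hg',
      by rw [add_mul, add_mul, hfd, hfd'], by rw [add_mul, add_mul, hgc, hgc']⟩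
  smul_mem' := by
    rintro s a ⟨ha, f, hf, g, hg, hfd, hgc⟩
    refine ⟨Submodule.smul_mem _ s ha, s * f, ?_, s * g, ?_, ?_, ?_⟩
    · simpa [smul_eq_mul] using Submodule.smul_mem _ s hf
    · simpa [smul_eq_mul] using Submodule.smul_mem _ s hg
    · show (s * a) * d = (s * f) * d
      rw [mul_assoc, hfd, mul_assoc]
    · show (s * a) * c = (s * g) * c
      rw [mul_assoc, hgc, mul_assoc]

lemma mem_Msub {R : Type*} [CommRing R] {c d r : R} :
    r ∈ Msub R c d ↔ r ∈ annI R (c * d) ∧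
      ∃ f ∈ annI R c, ∃ g ∈ annI R d, r * d = f * d ∧ r * c = g * c := Iff.rfl

end Core

section Helpers
variable {R : Type*} [CommRing R]

lemma dr_mem_annI {c d r : R} (hr : r ∈ annI R (c * d)) : d * r ∈ annI R c := by
  rw [mem_annI] at *
  rw [← mul_assoc]; exact hr

lemma cr_mem_annI {c d r : R} (hr : r ∈ annI R (c * d)) : c * r ∈ annI R d := by
  rw [mem_annI] at *
  calc d * (c * r) = c * d * r := by ring
  _ = 0 := hr

lemma ann_pair_Z {c d f g : R} (hf : f ∈ annI R c) (hg : g ∈ annI R d) :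
    c * f = d * g := by
  rw [mem_annI] at hf hg; rw [hf, hg]

lemma cf_mem_inf {c d f g : R} (h : c * f = d * g) :
    c * f ∈ Ideal.span {c} ⊓ Ideal.span {d} := by
  refine Submodule.mem_inf.mpr ⟨?_, ?_⟩
  · exact Ideal.mem_span_singleton.mpr ⟨f, rfl⟩
  · exact Ideal.mem_span_singleton.mpr ⟨g, h⟩

lemma rc_mem_inf_ann {c d r : R} (hr : r ∈ annI R (c * d)) :
    r * c ∈ Ideal.span {c} ⊓ annI R d := by
  rw [mem_annI] at hr
  refine Submodule.mem_inf.mpr ⟨Ideal.mem_span_singleton.mpr ⟨r, mul_comm r c⟩, ?_⟩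
  rw [mem_annI]
  calc d * (r * c) = c * d * r := by ring
  _ = 0 := hr

lemma rd_mem_ann_inf {c d r : R} (hr : r ∈ annI R (c * d)) :
    r * d ∈ annI R c ⊓ Ideal.span {d} := by
  rw [mem_annI] at hr
  refine Submodule.mem_inf.mpr ⟨?_, Ideal.mem_span_singleton.mpr ⟨r, mul_comm r d⟩⟩
  rw [mem_annI]
  calc c * (r * d) = c * d * r := by ring
  _ = 0 := hr

lemma HmkPQ {c d P Q : R} (hP : annI R c = Ideal.span {P}) (hQ : annI R d = Ideal.span {Q})
    (f g : R) : c * (f * P) = d * (g * Q) := by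
  have hp : c * P = 0 := by
    rw [← mem_annI (R := R)]
    rw [hP]
    exact Ideal.mem_span_singleton_self P
  have hq : d * Q = 0 := by
    rw [← mem_annI (R := R)]
    rw [hQ]
    exact Ideal.mem_span_singleton_self Q
  calc c * (f * P) = f * (c * P) := by ring
  _ = 0 := by rw [hp, mul_zero]
  _ = g * (d * Q) := by rw [hq, mul_zero]
  _ = d * (g * Q) := by ring

end Helpers

section QuotTypes
variable (R : Type*) [CommRing R]

/-- `ann(cd)/M`. -/
abbrev Tcd (c d : R) :=
  ↥(annI R (c * d)) ⧸ Submodule.comap (annI R (c * d)).subtype (Msub R c d)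

/-- `ann(c)/(ann(c)·(d))`. -/
abbrev Th (c d : R) :=
  ↥(annI R c) ⧸ Submodule.comap (annI R c).subtype (annI R c * Ideal.span {d})

/-- `ann(d)/((c)·ann(d))`. -/
abbrev Tv (c d : R) :=
  ↥(annI R d) ⧸ Submodule.comap (annI R d).subtype (Ideal.span {c} * annI R d)

/-- `((c) ∩ (d))/(cd)`. -/
abbrev T4 (c d : R) :=
  ↥(Ideal.span {c} ⊓ Ideal.span {d}) ⧸
    Submodule.comap (Ideal.span {c} ⊓ Ideal.span {d}).subtype (Ideal.span {c * d})

/-- `((c) ∩ ann(d))/((c)·ann(d))`. -/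
abbrev Tc' (c d : R) :=
  ↥(Ideal.span {c} ⊓ annI R d) ⧸
    Submodule.comap (Ideal.span {c} ⊓ annI R d).subtype (Ideal.span {c} * annI R d)

/-- `(ann(c) ∩ (d))/(ann(c)·(d))`. -/
abbrev Td' (c d : R) :=
  ↥(annI R c ⊓ Ideal.span {d}) ⧸
    Submodule.comap (annI R c ⊓ Ideal.span {d}).subtype (annI R c * Ideal.span {d})

/-- `φ : Z → R`, `(f, g) ↦ c·f`. -/
def phiZ (c d : R) : Zsub R c d →ₗ[R] R :=
  LinearMap.lsmul R R c ∘ₗ (LinearMap.fst R R R ∘ₗ (Zsub R c d).subtype)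

end QuotTypes

variable {R : Type*} [CommRing R]

/-!
All terms of the sequence are subquotients, and all maps are induced by linear maps between the
ambient modules, so exactness amounts to statements about elements of `R`. These hold because
`(f, g) ↦ c * f` maps `Z` onto `(c) ∩ (d)` with kernel `ann(c) × ann(d)`, and maps `B` onto `(cd)`
with kernel the pairs `(d * r, c * r)` for `r ∈ ann(cd)`. A class `[f, 0]` vanishes in `H` exactly
when `f ∈ ann(c)·(d)`, and likewise for `[0, g]`; `M` consists of those `r ∈ ann(cd)` for which both
entries of `(d * r, c * r)` vanish in this way.
-/

section Subquotient

variable {S U V W X : Type*} [Ring S] [AddCommGroup U] [Module S U] [AddCommGroup V] [Module S V]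
  [AddCommGroup W] [Module S W] [AddCommGroup X] [Module S X]
  {A A₀ : Submodule S U} {P P₀ : Submodule S V} {Q Q₀ : Submodule S W} {Z Z₀ : Submodule S X}

/-- The linear map `P / P₀ → Q / Q₀` of subquotients induced by a linear map `f` of the ambient
modules. Here `P / P₀` is encoded as the quotient of `P` by the preimage of `P₀` in `P`, that is, as
`P / (P ⊓ P₀)`. -/
def subquotientMap (f : V →ₗ[S] W) (hf : P ≤ Q.comap f) (hf₀ : P₀ ≤ Q₀.comap f) :
    P ⧸ P₀.comap P.subtype →ₗ[S] Q ⧸ Q₀.comap Q.subtype :=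
  Submodule.mapQ _ _ (f.restrict hf) fun _ hx => hf₀ hx

lemma subquotientMap_mk_eq_mk_iff {f : V →ₗ[S] W} {hf : P ≤ Q.comap f}
    {hf₀ : P₀ ≤ Q₀.comap f} {x : P} {y : Q} :
    subquotientMap f hf hf₀ (Submodule.Quotient.mk x) = Submodule.Quotient.mk y ↔
      f x - y ∈ Q₀ :=
  Submodule.Quotient.eq _

lemma subquotientMap_mk_eq_zero_iff {f : V →ₗ[S] W} {hf : P ≤ Q.comap f}
    {hf₀ : P₀ ≤ Q₀.comap f} {x : P} :
    subquotientMap f hf hf₀ (Submodule.Quotient.mk x) = 0 ↔ f x ∈ Q₀ :=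
  Submodule.Quotient.mk_eq_zero _

lemma coprod_subquotientMap_mk {i : U →ₗ[S] W} {j : V →ₗ[S] W}
    {hi : A ≤ Q.comap i} {hi₀ : A₀ ≤ Q₀.comap i} {hj : P ≤ Q.comap j} {hj₀ : P₀ ≤ Q₀.comap j}
    (x : A) (y : P) :
    (subquotientMap i hi hi₀).coprod (subquotientMap j hj hj₀)
        (Submodule.Quotient.mk x, Submodule.Quotient.mk y) =
      Submodule.Quotient.mk ⟨i x + j y, add_mem (hi x.2) (hj y.2)⟩ :=
  rfl

lemma subquotientMap_surjective {f : V →ₗ[S] W} {hf : P ≤ Q.comap f} {hf₀ : P₀ ≤ Q₀.comap f}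
    (h : Q ≤ P.map f) : Function.Surjective (subquotientMap f hf hf₀) := by
  intro y
  obtain ⟨⟨y, hy⟩, rfl⟩ := Submodule.Quotient.mk_surjective _ y
  obtain ⟨x, hx, rfl⟩ := h hy
  exact ⟨Submodule.Quotient.mk ⟨x, hx⟩, rfl⟩

lemma subquotientMap_prod_injective {f : U →ₗ[S] V} {g : U →ₗ[S] W}
    {hf : A ≤ P.comap f} {hf₀ : A₀ ≤ P₀.comap f} {hg : A ≤ Q.comap g} {hg₀ : A₀ ≤ Q₀.comap g}
    (h : A ⊓ (P₀.comap f ⊓ Q₀.comap g) ≤ A₀) :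
    Function.Injective ((subquotientMap f hf hf₀).prod (subquotientMap g hg hg₀)) := by
  refine (injective_iff_map_eq_zero _).2 fun x hx => ?_
  obtain ⟨⟨a, ha⟩, rfl⟩ := Submodule.Quotient.mk_surjective _ x
  obtain ⟨hfa, hga⟩ := Prod.mk_eq_zero.1 hx
  exact (Submodule.Quotient.mk_eq_zero _).2
    (h ⟨ha, subquotientMap_mk_eq_zero_iff.1 hfa, subquotientMap_mk_eq_zero_iff.1 hga⟩)

lemma exact_prod_coprod_subquotientMap_iff {f : U →ₗ[S] V} {g : U →ₗ[S] W}
    {hf : A ≤ P.comap f} {hf₀ : A₀ ≤ P₀.comap f} {hg : A ≤ Q.comap g} {hg₀ : A₀ ≤ Q₀.comap g}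
    {i : V →ₗ[S] X} {j : W →ₗ[S] X}
    {hi : P ≤ Z.comap i} {hi₀ : P₀ ≤ Z₀.comap i} {hj : Q ≤ Z.comap j} {hj₀ : Q₀ ≤ Z₀.comap j} :
    Function.Exact ((subquotientMap f hf hf₀).prod (subquotientMap g hg hg₀))
        ((subquotientMap i hi hi₀).coprod (subquotientMap j hj hj₀)) ↔
      ∀ x ∈ P, ∀ y ∈ Q, i x + j y ∈ Z₀ ↔ ∃ a ∈ A, f a - x ∈ P₀ ∧ g a - y ∈ Q₀ := by
  simp only [Function.Exact, Prod.forall, (Submodule.Quotient.mk_surjective _).forall,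
    Subtype.forall, Set.mem_range, (Submodule.Quotient.mk_surjective _).exists, Subtype.exists,
    LinearMap.prod_apply, Function.prod_apply, Prod.mk.injEq, subquotientMap_mk_eq_mk_iff,
    coprod_subquotientMap_mk, Submodule.Quotient.mk_eq_zero, Submodule.mem_comap,
    Submodule.subtype_apply, exists_prop]

lemma exact_coprod_subquotientMap_iff {i : U →ₗ[S] W} {j : V →ₗ[S] W} {k : W →ₗ[S] X}
    {hi : A ≤ Q.comap i} {hi₀ : A₀ ≤ Q₀.comap i} {hj : P ≤ Q.comap j} {hj₀ : P₀ ≤ Q₀.comap j}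
    {hk : Q ≤ Z.comap k} {hk₀ : Q₀ ≤ Z₀.comap k} :
    Function.Exact ((subquotientMap i hi hi₀).coprod (subquotientMap j hj hj₀))
        (subquotientMap k hk hk₀) ↔
      ∀ z ∈ Q, k z ∈ Z₀ ↔ ∃ x ∈ A, ∃ y ∈ P, i x + j y - z ∈ Q₀ := by
  simp only [Function.Exact, Prod.exists, (Submodule.Quotient.mk_surjective _).forall,
    Subtype.forall, Set.mem_range, (Submodule.Quotient.mk_surjective _).exists, Subtype.exists,
    subquotientMap_mk_eq_zero_iff, coprod_subquotientMap_mk, Submodule.Quotient.eq,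
    Submodule.mem_comap, map_sub, Submodule.subtype_apply, exists_prop]

end Subquotient

section Ideals

variable {c d : R}

lemma mem_Msub_iff_mul_mem {r : R} :
    r ∈ Msub R c d ↔ r ∈ annI R (c * d) ∧
      d * r ∈ annI R c * Ideal.span {d} ∧ c * r ∈ Ideal.span {c} * annI R d := by
  simp only [mem_Msub, Ideal.mem_mul_span_singleton, Ideal.mem_span_singleton_mul]
  constructor
  · rintro ⟨hr, f, hf, g, hg, hfd, hgc⟩
    exact ⟨hr, ⟨f, hf, by rw [← hfd, mul_comm]⟩, g, hg, by rw [mul_comm, ← hgc, mul_comm]⟩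
  · rintro ⟨hr, ⟨f, hf, hfd⟩, g, hg, hgc⟩
    exact ⟨hr, f, hf, g, hg, by rw [hfd, mul_comm], by rw [mul_comm, ← hgc, mul_comm]⟩

lemma mem_Bsub {f g : R} : (f, g) ∈ Bsub R c d ↔ ∃ r, d * r = f ∧ c * r = g := by
  simp [Bsub]

lemma comap_inl_Bsub :
    (Bsub R c d).comap (LinearMap.inl R R R) = annI R c * Ideal.span {d} := by
  ext f
  simp [mem_Bsub, Ideal.mem_mul_span_singleton, mem_annI, mul_comm d, and_comm]

lemma comap_inr_Bsub :
    (Bsub R c d).comap (LinearMap.inr R R R) = Ideal.span {c} * annI R d := by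
  ext g
  simp [mem_Bsub, Ideal.mem_span_singleton_mul, mem_annI]

lemma map_Zsub :
    (Zsub R c d).map (LinearMap.lsmul R R c ∘ₗ LinearMap.fst R R R) =
      Ideal.span {c} ⊓ Ideal.span {d} := by
  ext s
  constructor
  · rintro ⟨⟨f, g⟩, h, rfl⟩
    exact cf_mem_inf h
  · rintro ⟨hc, hd⟩
    obtain ⟨f, rfl⟩ := Ideal.mem_span_singleton.1 hc
    obtain ⟨g, hg⟩ := Ideal.mem_span_singleton.1 hd
    exact ⟨(f, g), hg, rfl⟩

lemma map_Bsub :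
    (Bsub R c d).map (LinearMap.lsmul R R c ∘ₗ LinearMap.fst R R R) = Ideal.span {c * d} := by
  ext s
  simp [Bsub, Ideal.mem_span_singleton', mul_comm, mul_left_comm]

lemma mem_Bsub_iff_exists_sub_mem_annI_mul {f g : R} (hf : f ∈ annI R c) :
    (f, g) ∈ Bsub R c d ↔ ∃ r ∈ annI R (c * d),
      d * r - f ∈ annI R c * Ideal.span {d} ∧ c * r - g ∈ Ideal.span {c} * annI R d := by
  constructor
  · intro h
    obtain ⟨r, rfl, rfl⟩ := mem_Bsub.1 h
    exact ⟨r, (mul_assoc c d r).trans hf, by simp, by simp⟩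
  · rintro ⟨r, -, hrf, hrg⟩
    rw [← comap_inl_Bsub] at hrf
    rw [← comap_inr_Bsub] at hrg
    have hr : (d * r, c * r) ∈ Bsub R c d := mem_Bsub.2 ⟨r, rfl, rfl⟩
    simpa using sub_mem (sub_mem hr hrf) hrg

lemma mul_mem_span_mul_iff_exists_sub_mem_Bsub {f g : R} (h : c * f = d * g) :
    c * f ∈ Ideal.span {c * d} ↔
      ∃ x ∈ annI R c, ∃ y ∈ annI R d, (x, y) - (f, g) ∈ Bsub R c d := by
  simp only [Prod.mk_sub_mk, mem_Bsub, mem_annI, Ideal.mem_span_singleton]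
  constructor
  · rintro ⟨r, hr⟩
    exact ⟨f - d * r, by linear_combination hr, g - c * r, by linear_combination hr - h,
      -r, by ring, by ring⟩
  · rintro ⟨x, hx, y, -, r, hr, -⟩
    exact ⟨-r, by linear_combination hx + c * hr⟩

end Ideals

section FundamentalSequence

/-- The map `α : ann(cd)/M → ann(c)/(ann(c)·(d)) × ann(d)/((c)·ann(d))` of the fundamental
sequence, induced by `r ↦ (d * r, c * r)`. -/
def fundamentalAlpha (c d : R) : Tcd R c d →ₗ[R] Th R c d × Tv R c d :=
  LinearMap.prod
    (subquotientMap (LinearMap.lsmul R R d) (fun _ => dr_mem_annI)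
      fun _ hr => (mem_Msub_iff_mul_mem.1 hr).2.1)
    (subquotientMap (LinearMap.lsmul R R c) (fun _ => cr_mem_annI)
      fun _ hr => (mem_Msub_iff_mul_mem.1 hr).2.2)

/-- The map `β : ann(c)/(ann(c)·(d)) × ann(d)/((c)·ann(d)) → H` of the fundamental sequence,
induced by `(f, g) ↦ (f, g)`. -/
def fundamentalBeta (c d : R) : Th R c d × Tv R c d →ₗ[R] Hmod R c d :=
  LinearMap.coprod
    (subquotientMap (LinearMap.inl R R R) (fun _ hf => ann_pair_Z hf (zero_mem _))
      comap_inl_Bsub.ge)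
    (subquotientMap (LinearMap.inr R R R) (fun _ hg => ann_pair_Z (zero_mem _) hg)
      comap_inr_Bsub.ge)

/-- The map `γ : H → ((c) ∩ (d))/(cd)` of the fundamental sequence, induced by
`(f, g) ↦ c * f`. -/
def fundamentalGamma (c d : R) : Hmod R c d →ₗ[R] T4 R c d :=
  subquotientMap (LinearMap.lsmul R R c ∘ₗ LinearMap.fst R R R)
    (Submodule.map_le_iff_le_comap.1 map_Zsub.le) (Submodule.map_le_iff_le_comap.1 map_Bsub.le)

variable {c d : R}

lemma fundamentalBeta_mk {f g : R} (hf : f ∈ annI R c) (hg : g ∈ annI R d) :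
    fundamentalBeta c d (Submodule.Quotient.mk ⟨f, hf⟩, Submodule.Quotient.mk ⟨g, hg⟩) =
      Hmk R c d f g (ann_pair_Z hf hg) :=
  congrArg Submodule.Quotient.mk (Subtype.ext (Prod.ext (add_zero f) (zero_add g)))

lemma fundamentalAlpha_injective : Function.Injective (fundamentalAlpha c d) :=
  subquotientMap_prod_injective fun _ => mem_Msub_iff_mul_mem.2

lemma exact_fundamentalAlpha_fundamentalBeta :
    Function.Exact (fundamentalAlpha c d) (fundamentalBeta c d) := by
  refine exact_prod_coprod_subquotientMap_iff.2 fun f hf g _ => ?_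
  simpa using mem_Bsub_iff_exists_sub_mem_annI_mul hf

lemma exact_fundamentalBeta_fundamentalGamma :
    Function.Exact (fundamentalBeta c d) (fundamentalGamma c d) := by
  refine exact_coprod_subquotientMap_iff.2 fun ⟨f, g⟩ h => ?_
  simpa using mul_mem_span_mul_iff_exists_sub_mem_Bsub h

lemma fundamentalGamma_surjective : Function.Surjective (fundamentalGamma c d) :=
  subquotientMap_surjective map_Zsub.ge

end FundamentalSequence

theorem stmt1 (c d : R) :
    ∃ (α : Tcd R c d →ₗ[R] Th R c d × Tv R c d)
      (β : Th R c d × Tv R c d →ₗ[R] Hmod R c d)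
      (γ : Hmod R c d →ₗ[R] T4 R c d),
      (∀ (r : R) (hr : r ∈ annI R (c * d)),
        α (Submodule.Quotient.mk ⟨r, hr⟩) =
          (Submodule.Quotient.mk ⟨d * r, dr_mem_annI hr⟩,
           Submodule.Quotient.mk ⟨c * r, cr_mem_annI hr⟩)) ∧
      (∀ (f g : R) (hf : f ∈ annI R c) (hg : g ∈ annI R d),
        β (Submodule.Quotient.mk ⟨f, hf⟩, Submodule.Quotient.mk ⟨g, hg⟩) =
          Hmk R c d f g (ann_pair_Z hf hg)) ∧
      (∀ (f g : R) (h : c * f = d * g),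
        γ (Hmk R c d f g h) = Submodule.Quotient.mk ⟨c * f, cf_mem_inf h⟩) ∧
      Function.Injective α ∧ Function.Exact ⇑α ⇑β ∧ Function.Exact ⇑β ⇑γ ∧
      Function.Surjective γ := by
  exact ⟨fundamentalAlpha c d, fundamentalBeta c d, fundamentalGamma c d,
    fun _ _ => rfl, fun _ _ => fundamentalBeta_mk, fun _ _ _ => rfl,
    fundamentalAlpha_injective, exact_fundamentalAlpha_fundamentalBeta,
    exact_fundamentalBeta_fundamentalGamma, fundamentalGamma_surjective⟩
end

section
/- Let R be a commutative ring and c, d ∈ R. The image of the map β : (ann(c)/(ann(c)·(d))) ⊕ (ann(d)/((c)·ann(d))) → H, ([f], [g]) ↦ [f, g], equals the sum H_h + H_v of the submodules of H generated by horizontally pure and vertically pure classes. -/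
open Submodule

variable {R : Type*} [CommRing R]

section PureClasses
variable (c d : R)

/-- The map `ann(c) → H`, `f ↦ [f, 0]`, whose values are the horizontally pure classes. -/
def horizontalClass : annI R c →ₗ[R] Hmod R c d :=
  Submodule.mkQ _ ∘ₗ
    (LinearMap.inl R R R ∘ₗ (annI R c).subtype).codRestrict (Zsub R c d)
      fun f => ann_pair_Z f.2 (zero_mem _)

/-- The map `ann(d) → H`, `g ↦ [0, g]`, whose values are the vertically pure classes. -/
def verticalClass : annI R d →ₗ[R] Hmod R c d :=
  Submodule.mkQ _ ∘ₗ
    (LinearMap.inr R R R ∘ₗ (annI R d).subtype).codRestrict (Zsub R c d)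
      fun g => ann_pair_Z (zero_mem _) g.2

variable {c d}

lemma horizontalClass_apply (f : annI R c) :
    horizontalClass c d f = Hmk R c d f 0 (ann_pair_Z f.2 (zero_mem _)) := rfl

lemma verticalClass_apply (g : annI R d) :
    verticalClass c d g = Hmk R c d 0 g (ann_pair_Z (zero_mem _) g.2) := rfl

lemma Hmk_add_Hmk {f g f' g' : R} (h : c * f = d * g) (h' : c * f' = d * g') :
    Hmk R c d f g h + Hmk R c d f' g' h' =
      Hmk R c d (f + f') (g + g') (by rw [mul_add, mul_add, h, h']) := rfl

lemma Hmk_eq_zero_iff {f g : R} (h : c * f = d * g) :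
    Hmk R c d f g h = 0 ↔ ∃ r, d * r = f ∧ c * r = g :=
  (Submodule.Quotient.mk_eq_zero _).trans (exists_congr fun _ => Prod.ext_iff)

lemma horizontalClass_add_verticalClass (f : annI R c) (g : annI R d) :
    horizontalClass c d f + verticalClass c d g = Hmk R c d f g (ann_pair_Z f.2 g.2) := by
  simp only [horizontalClass_apply, verticalClass_apply, Hmk_add_Hmk, add_zero, zero_add]

variable (c d)

lemma range_horizontalClass : LinearMap.range (horizontalClass c d) = Hpureh R c d := by
  apply le_antisymm
  · rintro _ ⟨f, rfl⟩
    exact subset_span ⟨f, _, horizontalClass_apply f⟩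
  · refine span_le.mpr ?_
    rintro _ ⟨f, hf, rfl⟩
    have f_mem : f ∈ annI R c := mem_annI.mpr (hf.trans (mul_zero d))
    exact ⟨⟨f, f_mem⟩, horizontalClass_apply _⟩

lemma range_verticalClass : LinearMap.range (verticalClass c d) = Hpurev R c d := by
  apply le_antisymm
  · rintro _ ⟨g, rfl⟩
    exact subset_span ⟨g, _, verticalClass_apply g⟩
  · refine span_le.mpr ?_
    rintro _ ⟨g, hg, rfl⟩
    have g_mem : g ∈ annI R d := mem_annI.mpr (hg.symm.trans (mul_zero c))
    exact ⟨⟨g, g_mem⟩, verticalClass_apply _⟩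

lemma ker_horizontalClass :
    LinearMap.ker (horizontalClass c d) =
      Submodule.comap (annI R c).subtype (annI R c * Ideal.span {d}) := by
  ext f
  rw [LinearMap.mem_ker, horizontalClass_apply, Hmk_eq_zero_iff, Submodule.mem_comap,
    Submodule.subtype_apply, Ideal.mem_mul_span_singleton]
  simp only [mem_annI, mul_comm d, and_comm]

lemma ker_verticalClass :
    LinearMap.ker (verticalClass c d) =
      Submodule.comap (annI R d).subtype (Ideal.span {c} * annI R d) := by
  ext g
  rw [LinearMap.mem_ker, verticalClass_apply, Hmk_eq_zero_iff, Submodule.mem_comap,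
    Submodule.subtype_apply, Ideal.mem_span_singleton_mul]
  simp only [mem_annI]

/-- The map `β : ann(c)/(ann(c)·(d)) × ann(d)/((c)·ann(d)) → H`, `([f], [g]) ↦ [f, g]`. -/
def annQuotientsToH : Th R c d × Tv R c d →ₗ[R] Hmod R c d :=
  LinearMap.coprod
    (Submodule.liftQ _ (horizontalClass c d) (ker_horizontalClass c d).ge)
    (Submodule.liftQ _ (verticalClass c d) (ker_verticalClass c d).ge)

lemma annQuotientsToH_mk (f : annI R c) (g : annI R d) :
    annQuotientsToH c d (Submodule.Quotient.mk f, Submodule.Quotient.mk g) =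
      Hmk R c d f g (ann_pair_Z f.2 g.2) := by
  rw [annQuotientsToH, LinearMap.coprod_apply, Submodule.liftQ_apply, Submodule.liftQ_apply,
    horizontalClass_add_verticalClass]

lemma range_annQuotientsToH :
    LinearMap.range (annQuotientsToH c d) = Hpureh R c d ⊔ Hpurev R c d := by
  rw [annQuotientsToH, LinearMap.range_coprod, Submodule.range_liftQ, Submodule.range_liftQ,
    range_horizontalClass, range_verticalClass]

end PureClasses

theorem stmt2 (c d : R) :
    ∃ β : Th R c d × Tv R c d →ₗ[R] Hmod R c d,
      (∀ (f g : R) (hf : f ∈ annI R c) (hg : g ∈ annI R d),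
        β (Submodule.Quotient.mk ⟨f, hf⟩, Submodule.Quotient.mk ⟨g, hg⟩) =
          Hmk R c d f g (ann_pair_Z hf hg)) ∧
      LinearMap.range β = Hpureh R c d ⊔ Hpurev R c d :=
  ⟨annQuotientsToH c d, fun f g hf hg => annQuotientsToH_mk c d ⟨f, hf⟩ ⟨g, hg⟩,
    range_annQuotientsToH c d⟩
end

section
/- Let R be a commutative ring and c, d ∈ R. Then H = H_h + H_v if and only if (c) ∩ (d) = (c·d). -/
/-!
A cycle `(f, g)` determines the common multiple `c * f = d * g` of `c` and `d`, and every common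
multiple arises this way. Boundaries yield the multiples of `c * d`, so there is an induced map
`H → R ⧸ (c * d)` with image `((c) ⊓ (d)) / (c * d)`. Pure classes yield `0`; conversely, if
`c * f = c * d * r`, then subtracting the boundary `(d * r, c * r)` from `(f, g)` splits its class
into pure ones. So the kernel is `H_h ⊔ H_v`, and it is everything exactly when the image vanishes.
-/

open Submodule

variable {R : Type*} [CommRing R]

lemma exists_Hmk_eq {c d : R} (x : Hmod R c d) :
    ∃ (f g : R) (h : c * f = d * g), Hmk R c d f g h = x := by
  obtain ⟨⟨⟨f, g⟩, h⟩, rfl⟩ := Submodule.Quotient.mk_surjective _ x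
  exact ⟨f, g, h, rfl⟩

lemma Hmk_mem_Hpureh {c d f : R} (h : c * f = d * 0) : Hmk R c d f 0 h ∈ Hpureh R c d :=
  subset_span ⟨f, h, rfl⟩

lemma Hmk_mem_Hpurev {c d g : R} (h : c * 0 = d * g) : Hmk R c d 0 g h ∈ Hpurev R c d :=
  subset_span ⟨g, h, rfl⟩

lemma Hmk_eq_Hmk_add_Hmk {c d f g r : R} (h : c * f = d * g) (hh : c * (f - d * r) = d * 0)
    (hv : c * 0 = d * (g - c * r)) :
    Hmk R c d f g h = Hmk R c d (f - d * r) 0 hh + Hmk R c d 0 (g - c * r) hv := by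
  refine (Submodule.Quotient.eq _).mpr ⟨r, ?_⟩
  ext <;> simp

lemma Hmk_mem_Hpureh_sup_Hpurev {c d f g : R} (h : c * f = d * g) (hcd : c * d ∣ c * f) :
    Hmk R c d f g h ∈ Hpureh R c d ⊔ Hpurev R c d := by
  obtain ⟨r, hr⟩ := hcd
  have hh : c * (f - d * r) = d * 0 := by linear_combination hr
  have hv : c * 0 = d * (g - c * r) := by linear_combination h - hr
  rw [Hmk_eq_Hmk_add_Hmk h hh hv]
  exact add_mem_sup (Hmk_mem_Hpureh hh) (Hmk_mem_Hpurev hv)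

lemma comap_Bsub_le_comap_phiZ (c d : R) :
    (Bsub R c d).comap (Zsub R c d).subtype ≤
      Submodule.comap (phiZ R c d) (Ideal.span {c * d}) := by
  rintro ⟨⟨f, g⟩, h⟩ ⟨r, hr⟩
  have hf : d * r = f := congrArg Prod.fst hr
  refine Ideal.mem_span_singleton.mpr ⟨r, ?_⟩
  change c * f = c * d * r
  rw [← hf, mul_assoc]

lemma range_phiZ (c d : R) :
    LinearMap.range (phiZ R c d) = Ideal.span {c} ⊓ Ideal.span {d} := by
  refine le_antisymm ?_ fun x ⟨hc, hd⟩ => ?_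
  · rintro _ ⟨⟨⟨f, g⟩, h⟩, rfl⟩
    exact cf_mem_inf h
  · obtain ⟨f, rfl⟩ := Ideal.mem_span_singleton.mp hc
    obtain ⟨g, hg⟩ := Ideal.mem_span_singleton.mp hd
    exact ⟨⟨(f, g), hg⟩, rfl⟩

/-- The map `H → R ⧸ (c * d)` induced by `phiZ`: it sends `[f, g]` to the class of the common
multiple `c * f = d * g`, and so measures how far `[f, g]` is from a sum of pure classes. -/
def commonMultipleMap (c d : R) : Hmod R c d →ₗ[R] R ⧸ Ideal.span {c * d} :=
  mapQ _ (Ideal.span {c * d}) (phiZ R c d) (comap_Bsub_le_comap_phiZ c d)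

lemma commonMultipleMap_Hmk_eq_zero_iff {c d f g : R} (h : c * f = d * g) :
    commonMultipleMap c d (Hmk R c d f g h) = 0 ↔ c * d ∣ c * f :=
  (Submodule.Quotient.mk_eq_zero _).trans Ideal.mem_span_singleton

lemma ker_commonMultipleMap (c d : R) :
    LinearMap.ker (commonMultipleMap c d) = Hpureh R c d ⊔ Hpurev R c d := by
  refine le_antisymm (fun x hx => ?_) (sup_le (span_le.mpr ?_) (span_le.mpr ?_))
  · obtain ⟨f, g, h, rfl⟩ := exists_Hmk_eq x
    exact Hmk_mem_Hpureh_sup_Hpurev h ((commonMultipleMap_Hmk_eq_zero_iff h).mp hx)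
  · rintro _ ⟨f, h, rfl⟩
    have hcf : c * f = 0 := h.trans (mul_zero d)
    exact (commonMultipleMap_Hmk_eq_zero_iff h).mpr (hcf ▸ dvd_zero _)
  · rintro _ ⟨g, h, rfl⟩
    exact (commonMultipleMap_Hmk_eq_zero_iff h).mpr ((mul_zero c).symm ▸ dvd_zero _)

lemma range_commonMultipleMap (c d : R) :
    LinearMap.range (commonMultipleMap c d) =
      Submodule.map (Ideal.span {c * d}).mkQ (Ideal.span {c} ⊓ Ideal.span {d}) := by
  rw [commonMultipleMap, range_mapQ, range_phiZ]

theorem stmt3 (c d : R) :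
    Hpureh R c d ⊔ Hpurev R c d = ⊤ ↔
      Ideal.span {c} ⊓ Ideal.span {d} = Ideal.span {c * d} := by
  have hle : Ideal.span {c * d} ≤ Ideal.span {c} ⊓ Ideal.span {d} := by
    rw [← Ideal.span_singleton_mul_span_singleton]
    exact Ideal.mul_le_inf
  calc Hpureh R c d ⊔ Hpurev R c d = ⊤
    _ ↔ commonMultipleMap c d = 0 := by rw [← ker_commonMultipleMap, LinearMap.ker_eq_top]
    _ ↔ Submodule.map (Ideal.span {c * d}).mkQ (Ideal.span {c} ⊓ Ideal.span {d}) = ⊥ := by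
      rw [← LinearMap.range_eq_bot, range_commonMultipleMap]
    _ ↔ Ideal.span {c} ⊓ Ideal.span {d} ≤ Ideal.span {c * d} := by
      rw [← LinearMap.le_ker_iff_map, ker_mkQ]
    _ ↔ Ideal.span {c} ⊓ Ideal.span {d} = Ideal.span {c * d} := hle.ge_iff_eq'
end

section
/- Let R be a commutative ring and c, d ∈ R. The map μ_c : ann(c·d)/M → ((c) ∩ ann(d))/((c)·ann(d)) sending the class of r to the class of r·c is a well-defined isomorphism of R-modules, and likewise the map μ_d : ann(c·d)/M → (ann(c) ∩ (d))/(ann(c)·(d)) sending the class of r to the class of r·d is a well-defined isomorphism of R-modules. -/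
open Submodule

variable {R : Type*} [CommRing R]

/-!
The ideal `M` is `ann(c) + ann(d)`: if `r * c = g * c` then `r - g ∈ ann(c)`. Multiplication by `c`
has kernel `ann(c)` and image `(c)`, the preimage of `ann(d)` under it is `ann(cd)`, and it carries
`ann(d)` onto `(c)·ann(d)`. Hence it maps `ann(cd)` onto `(c) ∩ ann(d)`, and the preimage of
`(c)·ann(d)` is `ann(d) + ann(c) = M`. The situation is symmetric in `c` and `d`.
-/

section Subquotient

variable {S V W : Type*} [Ring S] [AddCommGroup V] [Module S V] [AddCommGroup W] [Module S W]
  {p p' : Submodule S V} {q q' : Submodule S W}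

/-- The isomorphism of subquotients `p / (p ∩ p') ≃ q / (q ∩ q')` induced by a linear map that
carries `p` onto `q` and under which `p'` is, within `p`, the preimage of `q'`. -/
noncomputable def subquotientEquiv (f : V →ₗ[S] W) (hmap : p.map f = q)
    (hcomap : ∀ x ∈ p, f x ∈ q' ↔ x ∈ p') :
    (p ⧸ p'.comap p.subtype) ≃ₗ[S] q ⧸ q'.comap q.subtype :=
  let fpq : p →ₗ[S] q := f.restrict (map_le_iff_le_comap.mp hmap.le)
  have fpq_surjective : Function.Surjective fpq := by
    rintro ⟨y, hy⟩
    obtain ⟨x, hx, rfl⟩ := hmap.ge hy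
    exact ⟨⟨x, hx⟩, rfl⟩
  have comap_eq_ker : p'.comap p.subtype = LinearMap.ker ((q'.comap q.subtype).mkQ ∘ₗ fpq) := by
    rw [LinearMap.ker_comp, ker_mkQ]
    ext x
    exact (hcomap x x.2).symm
  quotEquivOfEq _ _ comap_eq_ker ≪≫ₗ
    LinearMap.quotKerEquivOfSurjective _ ((mkQ_surjective _).comp fpq_surjective)

lemma subquotientEquiv_mk (f : V →ₗ[S] W) (hmap : p.map f = q)
    (hcomap : ∀ x ∈ p, f x ∈ q' ↔ x ∈ p') {x : V} (hx : x ∈ p) :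
    subquotientEquiv f hmap hcomap (Submodule.Quotient.mk ⟨x, hx⟩) =
      Submodule.Quotient.mk ⟨f x, hmap.le (mem_map_of_mem hx)⟩ :=
  rfl

end Subquotient

lemma ker_toSpanSingleton_eq_annI (c : R) :
    LinearMap.ker (LinearMap.toSpanSingleton R R c) = annI R c := by
  ext r
  rw [LinearMap.mem_ker, LinearMap.toSpanSingleton_apply, smul_eq_mul, mem_annI, mul_comm]

lemma comap_toSpanSingleton_annI (c d : R) :
    Submodule.comap (LinearMap.toSpanSingleton R R c) (annI R d) = annI R (c * d) := by
  ext r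
  rw [mem_comap, LinearMap.toSpanSingleton_apply, smul_eq_mul, mem_annI, mem_annI,
    mul_comm r, mul_left_comm, mul_assoc]

lemma map_toSpanSingleton_eq_span_mul (c : R) (I : Ideal R) :
    Submodule.map (LinearMap.toSpanSingleton R R c) I = Ideal.span {c} * I := by
  ext x
  simp only [mem_map, LinearMap.toSpanSingleton_apply, smul_eq_mul, Ideal.mem_span_singleton_mul,
    mul_comm c]

lemma map_toSpanSingleton_annI_mul_left (c d : R) :
    Submodule.map (LinearMap.toSpanSingleton R R c) (annI R (c * d)) =
      Ideal.span {c} ⊓ annI R d := by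
  rw [← comap_toSpanSingleton_annI, map_comap_eq, LinearMap.range_toSpanSingleton, Ideal.span]

lemma map_toSpanSingleton_annI_mul_right (c d : R) :
    Submodule.map (LinearMap.toSpanSingleton R R d) (annI R (c * d)) =
      annI R c ⊓ Ideal.span {d} := by
  rw [mul_comm, inf_comm, map_toSpanSingleton_annI_mul_left]

lemma Msub_eq_annI_sup_annI (c d : R) : Msub R c d = annI R c ⊔ annI R d := by
  ext r
  rw [mem_Msub, mem_sup]
  constructor
  · rintro ⟨-, -, -, g, hg, -, hrc⟩
    exact ⟨r - g, mem_annI.mpr (by linear_combination hrc), g, hg, sub_add_cancel r g⟩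
  · rintro ⟨f, hf, g, hg, rfl⟩
    have hcf : c * f = 0 := hf
    have hdg : d * g = 0 := hg
    exact ⟨mem_annI.mpr (by linear_combination d * hcf + c * hdg), f, hf, g, hg,
      by linear_combination hdg, by linear_combination hcf⟩

lemma mul_mem_span_mul_annI_iff {c d r : R} :
    r * c ∈ Ideal.span {c} * annI R d ↔ r ∈ Msub R c d := by
  rw [← map_toSpanSingleton_eq_span_mul, ← smul_eq_mul, ← LinearMap.toSpanSingleton_apply,
    ← mem_comap, comap_map_eq, ker_toSpanSingleton_eq_annI, sup_comm, Msub_eq_annI_sup_annI]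

lemma mul_mem_annI_mul_span_iff {c d r : R} :
    r * d ∈ annI R c * Ideal.span {d} ↔ r ∈ Msub R c d := by
  rw [mul_comm (annI R c), mul_mem_span_mul_annI_iff, Msub_eq_annI_sup_annI,
    Msub_eq_annI_sup_annI, sup_comm]

theorem stmt8 (c d : R) :
    (∃ e : Tcd R c d ≃ₗ[R] Tc' R c d,
      ∀ (r : R) (hr : r ∈ annI R (c * d)),
        e (Submodule.Quotient.mk ⟨r, hr⟩) =
          Submodule.Quotient.mk ⟨r * c, rc_mem_inf_ann hr⟩) ∧
    (∃ e : Tcd R c d ≃ₗ[R] Td' R c d,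
      ∀ (r : R) (hr : r ∈ annI R (c * d)),
        e (Submodule.Quotient.mk ⟨r, hr⟩) =
          Submodule.Quotient.mk ⟨r * d, rd_mem_ann_inf hr⟩) := by
  constructor
  · exact ⟨subquotientEquiv (LinearMap.toSpanSingleton R R c)
      (map_toSpanSingleton_annI_mul_left c d) fun _ _ => mul_mem_span_mul_annI_iff,
      fun _ hr => subquotientEquiv_mk _ _ _ hr⟩
  · exact ⟨subquotientEquiv (LinearMap.toSpanSingleton R R d)
      (map_toSpanSingleton_annI_mul_right c d) fun _ _ => mul_mem_annI_mul_span_iff,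
      fun _ hr => subquotientEquiv_mk _ _ _ hr⟩
end

section
/- Let ℓ, m be positive integers and R = F₂[x, y]/(xˡ − 1, yᵐ − 1). Let c ∈ R be the image of a univariate polynomial c(x) ∈ F₂[x] and let d ∈ R be the image of a univariate polynomial d(y) ∈ F₂[y]. Then (c) ∩ (d) = (c·d) in R; equivalently, the associated module H satisfies H = H_h + H_v (the code C(c,d) is pure). -/
open Submodule

/-- The ring `F₂[x, y]/(xˡ − 1, yᵐ − 1)` underlying bivariate bicycle codes. -/
abbrev BBRing (l m : ℕ) : Type :=
  MvPolynomial (Fin 2) (ZMod 2) ⧸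
    Ideal.span {(MvPolynomial.X 0 : MvPolynomial (Fin 2) (ZMod 2)) ^ l - 1,
      (MvPolynomial.X 1 : MvPolynomial (Fin 2) (ZMod 2)) ^ m - 1}

/-- The ideal `(xˡ − 1, yᵐ − 1)`. -/
noncomputable abbrev BBIdeal (l m : ℕ) : Ideal (MvPolynomial (Fin 2) (ZMod 2)) :=
  Ideal.span {(MvPolynomial.X 0 : MvPolynomial (Fin 2) (ZMod 2)) ^ l - 1,
    (MvPolynomial.X 1 : MvPolynomial (Fin 2) (ZMod 2)) ^ m - 1}

/-!
Over a field `k`, every linear map `f` has a generalized inverse `s`, that is `f ∘ s ∘ f = f`. If an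
element `z` of a tensor product lies in the images of both `f ⊗ 1` and `1 ⊗ g`, say `z = (1 ⊗ g) w`,
then `z = (f s ⊗ 1) z = (f ⊗ g) ((s ⊗ 1) w)`. Applied to the multiplications by `a` and `b`, this
gives `(a ⊗ 1) ∩ (1 ⊗ b) = (a ⊗ b)` in the tensor product of any two commutative `k`-algebras, and
`F₂[x, y]/(xˡ − 1, yᵐ − 1)` is the tensor product of `F₂[x]/(xˡ − 1)` and `F₂[y]/(yᵐ − 1)`.

Purity is equivalent to the equality of ideals because `[f, g] ↦ c f` maps `H` onto
`((c) ∩ (d))/(cd)` with kernel `H_h + H_v`.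
-/

section Purity
variable {R : Type*} [CommRing R]

/-- The map `[f, g] ↦ c f` that `phiZ` induces on `H`. Its target is all of `R/(cd)`; only its
kernel and image matter, so it is not restricted to `T4 R c d`. -/
def phiH (c d : R) : Hmod R c d →ₗ[R] R ⧸ Ideal.span {c * d} :=
  Submodule.mapQ _ _ (phiZ R c d) <| by
    rintro ⟨⟨_, _⟩, _⟩ ⟨r, hr⟩
    obtain ⟨rfl, rfl⟩ := Prod.mk.inj hr
    exact Ideal.mem_span_singleton.mpr ⟨r, (mul_assoc c d r).symm⟩

lemma phiH_Hmk_eq_zero_iff {c d f g : R} (h : c * f = d * g) :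
    phiH c d (Hmk R c d f g h) = 0 ↔ c * d ∣ c * f :=
  (Submodule.Quotient.mk_eq_zero _).trans Ideal.mem_span_singleton

lemma ker_phiH (c d : R) : LinearMap.ker (phiH c d) = Hpureh R c d ⊔ Hpurev R c d := by
  apply le_antisymm
  · intro x hx
    obtain ⟨⟨⟨f, g⟩, hfg : c * f = d * g⟩, rfl⟩ := Submodule.Quotient.mk_surjective _ x
    obtain ⟨r, hr⟩ := (phiH_Hmk_eq_zero_iff hfg).mp hx
    have hf : c * (f - d * r) = d * 0 := by linear_combination hr
    have hg : c * 0 = d * (g - c * r) := by linear_combination hfg - hr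
    refine Submodule.mem_sup.mpr ⟨Hmk R c d _ 0 hf, subset_span ⟨_, hf, rfl⟩,
      Hmk R c d 0 _ hg, subset_span ⟨_, hg, rfl⟩, Eq.symm ?_⟩
    rw [Hmk, Hmk, ← Submodule.Quotient.mk_add, Submodule.Quotient.eq]
    exact ⟨r, by ext <;> simp⟩
  · refine sup_le (span_le.mpr ?_) (span_le.mpr ?_)
    · rintro _ ⟨f, hf, rfl⟩
      exact (phiH_Hmk_eq_zero_iff hf).mpr (by simp [hf])
    · rintro _ ⟨g, hg, rfl⟩
      exact (phiH_Hmk_eq_zero_iff hg).mpr (by simp)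

theorem Hpureh_sup_Hpurev_eq_top_iff {c d : R} :
    Hpureh R c d ⊔ Hpurev R c d = ⊤ ↔
      Ideal.span {c} ⊓ Ideal.span {d} = Ideal.span {c * d} := by
  have mul_le_inf : Ideal.span {c * d} ≤ Ideal.span {c} ⊓ Ideal.span {d} :=
    Ideal.span_singleton_mul_span_singleton c d ▸ Ideal.mul_le_inf
  rw [← ker_phiH, eq_top_iff]
  constructor
  · refine fun hker ↦ le_antisymm ?_ mul_le_inf
    rintro z ⟨hc, hd⟩
    obtain ⟨f, rfl⟩ := Ideal.mem_span_singleton.mp hc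
    obtain ⟨g, hfg⟩ := Ideal.mem_span_singleton.mp hd
    exact Ideal.mem_span_singleton.mpr ((phiH_Hmk_eq_zero_iff hfg).mp (hker mem_top))
  · rintro hinf x -
    obtain ⟨⟨⟨f, g⟩, hfg⟩, rfl⟩ := Submodule.Quotient.mk_surjective _ x
    exact (phiH_Hmk_eq_zero_iff hfg).mpr
      (Ideal.mem_span_singleton.mp (hinf ▸ cf_mem_inf hfg))

end Purity

open scoped TensorProduct

section LinearAlgebra

lemma exists_comp_comp_eq_self {k V W : Type*} [DivisionRing k] [AddCommGroup V] [Module k V]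
    [AddCommGroup W] [Module k W] (f : V →ₗ[k] W) :
    ∃ s : W →ₗ[k] V, f ∘ₗ s ∘ₗ f = f := by
  obtain ⟨t, ht⟩ := f.rangeRestrict.exists_rightInverse_of_surjective f.range_rangeRestrict
  obtain ⟨s, hs⟩ := t.exists_extend
  refine ⟨s, LinearMap.ext fun v ↦ ?_⟩
  have hst : s (f v) = t (f.rangeRestrict v) := LinearMap.congr_fun hs (f.rangeRestrict v)
  have hft : f.rangeRestrict (t (f.rangeRestrict v)) = f.rangeRestrict v :=
    LinearMap.congr_fun ht (f.rangeRestrict v)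
  exact (congrArg f hst).trans (congrArg Subtype.val hft)

lemma range_rTensor_inf_range_lTensor_of_comp_comp_eq_self {k V V' W W' : Type*} [CommSemiring k]
    [AddCommMonoid V] [AddCommMonoid V'] [AddCommMonoid W] [AddCommMonoid W']
    [Module k V] [Module k V'] [Module k W] [Module k W']
    {f : V →ₗ[k] V'} {s : V' →ₗ[k] V} (hs : f ∘ₗ s ∘ₗ f = f) (g : W →ₗ[k] W') :
    LinearMap.range (f.rTensor W') ⊓ LinearMap.range (g.lTensor V') =
      LinearMap.range (TensorProduct.map f g) := by
  apply le_antisymm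
  · rintro z ⟨⟨u, hu⟩, ⟨w, hw⟩⟩
    refine ⟨s.rTensor W w, ?_⟩
    calc TensorProduct.map f g (s.rTensor W w)
        = (f ∘ₗ s).rTensor W' (g.lTensor V' w) := by
          simp only [← LinearMap.comp_apply, LinearMap.map_comp_rTensor,
            LinearMap.rTensor_comp_lTensor]
      _ = (f ∘ₗ s ∘ₗ f).rTensor W' u := by
          rw [hw, ← hu, ← LinearMap.rTensor_comp_apply, LinearMap.comp_assoc]
      _ = z := by rw [hs, hu]
  · apply le_inf
    · rw [← LinearMap.rTensor_comp_lTensor]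
      exact LinearMap.range_comp_le_range _ _
    · rw [← LinearMap.lTensor_comp_rTensor]
      exact LinearMap.range_comp_le_range _ _

end LinearAlgebra

section TensorProductAlgebra

lemma mem_range_mulLeft_iff {k A : Type*} [CommSemiring k] [Semiring A] [Algebra k A] {x z : A} :
    z ∈ LinearMap.range (LinearMap.mulLeft k x) ↔ x ∣ z :=
  exists_congr fun _ ↦ eq_comm

theorem span_tmul_one_inf_span_one_tmul {k A B : Type*} [Field k] [CommRing A] [CommRing B]
    [Algebra k A] [Algebra k B] (a : A) (b : B) :
    Ideal.span {a ⊗ₜ[k] (1 : B)} ⊓ Ideal.span {(1 : A) ⊗ₜ[k] b} = Ideal.span {a ⊗ₜ[k] b} := by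
  obtain ⟨s, hs⟩ := exists_comp_comp_eq_self (LinearMap.mulLeft k a)
  have hrange : LinearMap.range (LinearMap.mulLeft k (a ⊗ₜ[k] (1 : B))) ⊓
      LinearMap.range (LinearMap.mulLeft k ((1 : A) ⊗ₜ[k] b)) =
        LinearMap.range (LinearMap.mulLeft k (a ⊗ₜ[k] b)) := by
    simpa only [LinearMap.mulLeft_tmul, LinearMap.mulLeft_one, LinearMap.rTensor,
      LinearMap.lTensor] using
      range_rTensor_inf_range_lTensor_of_comp_comp_eq_self hs (LinearMap.mulLeft k b)
  ext z
  simpa only [Submodule.mem_inf, mem_range_mulLeft_iff, Ideal.mem_span_singleton]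
    using SetLike.ext_iff.mp hrange z

end TensorProductAlgebra

section PolynomialQuotient
variable {k : Type*} [CommRing k] {P Q : Polynomial k}

lemma span_aeval_le_ker_aeval {S : Type*} [CommRing S] [Algebra k S] {v : Fin 2 → S}
    (hP : Polynomial.aeval (v 0) P = 0) (hQ : Polynomial.aeval (v 1) Q = 0) :
    Ideal.span {Polynomial.aeval (MvPolynomial.X 0) P, Polynomial.aeval (MvPolynomial.X 1) Q} ≤
      RingHom.ker (MvPolynomial.aeval v : MvPolynomial (Fin 2) k →ₐ[k] S) := by
  rw [Ideal.span_le]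
  rintro _ (rfl | rfl) <;> simpa [← Polynomial.aeval_algHom_apply]

variable {I : Ideal (MvPolynomial (Fin 2) k)}
  (hI : I = Ideal.span {Polynomial.aeval (MvPolynomial.X 0) P,
    Polynomial.aeval (MvPolynomial.X 1) Q})

/-- The isomorphism `k[x]/(P) ⊗ k[y]/(Q) ≃ k[x, y]/(P(x), Q(y))`. The ideal is a variable `I`, so
that its generators need not be syntactically of the form `P(x)` and `Q(y)`. -/
noncomputable def adjoinRootTensorEquiv :
    AdjoinRoot P ⊗[k] AdjoinRoot Q ≃ₐ[k] MvPolynomial (Fin 2) k ⧸ I :=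
  have aeval_x : Polynomial.aeval (Ideal.Quotient.mkₐ k I (MvPolynomial.X 0)) P = 0 := by
    rw [Polynomial.aeval_algHom_apply, Ideal.Quotient.mkₐ_eq_mk, Ideal.Quotient.eq_zero_iff_mem, hI]
    exact Ideal.subset_span (Set.mem_insert _ _)
  have aeval_y : Polynomial.aeval (Ideal.Quotient.mkₐ k I (MvPolynomial.X 1)) Q = 0 := by
    rw [Polynomial.aeval_algHom_apply, Ideal.Quotient.mkₐ_eq_mk, Ideal.Quotient.eq_zero_iff_mem, hI]
    exact Ideal.subset_span (Set.mem_insert_of_mem _ rfl)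
  let toQuotient := Algebra.TensorProduct.productMap
    (AdjoinRoot.liftAlgHom P (Algebra.ofId k _) _ aeval_x)
    (AdjoinRoot.liftAlgHom Q (Algebra.ofId k _) _ aeval_y)
  let roots : Fin 2 → AdjoinRoot P ⊗[k] AdjoinRoot Q :=
    ![Algebra.TensorProduct.includeLeft (AdjoinRoot.root P),
      Algebra.TensorProduct.includeRight (AdjoinRoot.root Q)]
  have le_ker : I ≤ RingHom.ker (MvPolynomial.aeval roots) := hI.le.trans <|
    span_aeval_le_ker_aeval
      ((Polynomial.aeval_algHom_apply Algebra.TensorProduct.includeLeft _ P).trans (by simp))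
      ((Polynomial.aeval_algHom_apply Algebra.TensorProduct.includeRight _ Q).trans (by simp))
  let ofQuotient := Ideal.Quotient.liftₐ I (MvPolynomial.aeval roots) le_ker
  have ofQuotient_mk (p) : ofQuotient (Ideal.Quotient.mk I p) = MvPolynomial.aeval roots p := rfl
  AlgEquiv.ofAlgHom toQuotient ofQuotient
    (by
      refine Ideal.Quotient.algHom_ext k (MvPolynomial.algHom_ext fun i ↦ ?_)
      fin_cases i <;> simp [ofQuotient_mk, toQuotient, roots])
    (by ext <;> simp [ofQuotient_mk, toQuotient, roots])

lemma adjoinRootTensorEquiv_mk_tmul_one (p : Polynomial k) :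
    adjoinRootTensorEquiv hI (AdjoinRoot.mk P p ⊗ₜ 1) =
      Ideal.Quotient.mk I (Polynomial.aeval (MvPolynomial.X 0) p) := by
  simp only [adjoinRootTensorEquiv, AlgEquiv.ofAlgHom_apply,
    Algebra.TensorProduct.productMap_apply_tmul, map_one, mul_one]
  exact Polynomial.aeval_algHom_apply (Ideal.Quotient.mkₐ k I) _ p

lemma adjoinRootTensorEquiv_one_tmul_mk (q : Polynomial k) :
    adjoinRootTensorEquiv hI (1 ⊗ₜ AdjoinRoot.mk Q q) =
      Ideal.Quotient.mk I (Polynomial.aeval (MvPolynomial.X 1) q) := by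
  simp only [adjoinRootTensorEquiv, AlgEquiv.ofAlgHom_apply,
    Algebra.TensorProduct.productMap_apply_tmul, map_one, one_mul]
  exact Polynomial.aeval_algHom_apply (Ideal.Quotient.mkₐ k I) _ q

end PolynomialQuotient

lemma BBIdeal_eq_span_aeval (l m : ℕ) :
    BBIdeal l m = Ideal.span
      {Polynomial.aeval (MvPolynomial.X 0) (Polynomial.X ^ l - 1 : Polynomial (ZMod 2)),
        Polynomial.aeval (MvPolynomial.X 1) (Polynomial.X ^ m - 1 : Polynomial (ZMod 2))} := by
  simp

theorem stmt14_general {k A B R : Type*} [Field k] [CommRing A] [CommRing B] [CommRing R]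
    [Algebra k A] [Algebra k B] (e : A ⊗[k] B ≃+* R) (a : A) (b : B) (c d : R)
    (hc : c = e (a ⊗ₜ 1)) (hd : d = e (1 ⊗ₜ b)) :
    Ideal.span {c} ⊓ Ideal.span {d} = Ideal.span {c * d} ∧ Hpureh R c d ⊔ Hpurev R c d = ⊤ := by
  rw [Hpureh_sup_Hpurev_eq_top_iff, and_self]
  have hcd : c * d = e (a ⊗ₜ b) := by simp [hc, hd, ← map_mul]
  ext z
  obtain ⟨z, rfl⟩ := e.surjective z
  have hz := SetLike.ext_iff.mp (span_tmul_one_inf_span_one_tmul (k := k) a b) z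
  rw [hcd, hc, hd]
  simpa only [Submodule.mem_inf, Ideal.mem_span_singleton, map_dvd_iff] using hz

/-- If `c` is the image of a univariate polynomial in `x` and `d` the image of a
univariate polynomial in `y`, then `(c) ∩ (d) = (c·d)`; equivalently,
`H = H_h + H_v`, i.e. the code `C(c, d)` is pure. -/
theorem stmt14 (l m : ℕ) (hl : 0 < l) (hm : 0 < m)
    (pc pd : Polynomial (ZMod 2)) (c d : BBRing l m)
    (hc : c = Ideal.Quotient.mk (BBIdeal l m)
      (Polynomial.aeval (MvPolynomial.X 0 : MvPolynomial (Fin 2) (ZMod 2)) pc))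
    (hd : d = Ideal.Quotient.mk (BBIdeal l m)
      (Polynomial.aeval (MvPolynomial.X 1 : MvPolynomial (Fin 2) (ZMod 2)) pd)) :
    Ideal.span {c} ⊓ Ideal.span {d} = Ideal.span {c * d} ∧
    Hpureh (BBRing l m) c d ⊔ Hpurev (BBRing l m) c d = ⊤ :=
  have hI := BBIdeal_eq_span_aeval l m
  stmt14_general (adjoinRootTensorEquiv hI).toRingEquiv (AdjoinRoot.mk _ pc)
    (AdjoinRoot.mk _ pd) c d
    (hc.trans (adjoinRootTensorEquiv_mk_tmul_one hI pc).symm)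
    (hd.trans (adjoinRootTensorEquiv_one_tmul_mk hI pd).symm)
end

section
/- Let ℓ, m be positive integers and R = F₂[x, y]/(xˡ − 1, yᵐ − 1). Suppose c ∈ R is either (i) the image of a univariate polynomial (in x alone or in y alone), or (ii) semiperiodic, i.e. c = x^k + ζ(y) with k·k' = ℓ for some ζ(y) ∈ F₂[y], or c = y^k + ξ(x) with k·k' = m for some ξ(x) ∈ F₂[x]. Then the annihilator ideal ann_R(c) is principal. Consequently, if c, d ∈ R are each univariate or semiperiodic and (c) ∩ (d) = (c·d), then the bivariate bicycle code C(c, d) is principal, i.e. it is pure and ann_R(c), ann_R(d) are principal ideals. -/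
open Submodule

/-- `c ∈ R` is the image of a univariate polynomial (in `x` alone or in `y` alone),
or is semiperiodic: `c = x^k + ζ(y)` with `k·k' = ℓ`, or `c = y^k + ξ(x)` with
`k·k' = m`. -/
def IsUniOrSemiperiodic (l m : ℕ) (c : BBRing l m) : Prop :=
  (∃ p : Polynomial (ZMod 2), c = Ideal.Quotient.mk (BBIdeal l m)
    (Polynomial.aeval (MvPolynomial.X 0 : MvPolynomial (Fin 2) (ZMod 2)) p)) ∨
  (∃ p : Polynomial (ZMod 2), c = Ideal.Quotient.mk (BBIdeal l m)
    (Polynomial.aeval (MvPolynomial.X 1 : MvPolynomial (Fin 2) (ZMod 2)) p)) ∨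
  (∃ (k k' : ℕ) (z : Polynomial (ZMod 2)), 0 < k ∧ 0 < k' ∧ k * k' = l ∧
    c = Ideal.Quotient.mk (BBIdeal l m)
      ((MvPolynomial.X 0 : MvPolynomial (Fin 2) (ZMod 2)) ^ k +
        Polynomial.aeval (MvPolynomial.X 1 : MvPolynomial (Fin 2) (ZMod 2)) z)) ∨
  (∃ (k k' : ℕ) (z : Polynomial (ZMod 2)), 0 < k ∧ 0 < k' ∧ k * k' = m ∧
    c = Ideal.Quotient.mk (BBIdeal l m)
      ((MvPolynomial.X 1 : MvPolynomial (Fin 2) (ZMod 2)) ^ k +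
        Polynomial.aeval (MvPolynomial.X 0 : MvPolynomial (Fin 2) (ZMod 2)) z))

/-!
Write `S = K[x, y]/(f(x), g(y))` as `A[x]/(f)` with `A = K[y]/(g)`, a principal ideal ring. As
`A[x]/(f)` is flat over `A`, annihilators of elements of `A` are extended from `A`, hence principal;
this is the univariate case.

Principality of the annihilator of `D` modulo `E` can be tested with `D` and `E` exchanged, provided
`D` is not a zero divisor. For `D = p(x) + z(y)` with `p` nonconstant and `E = f = F(p(x))`, the
exchange leads to `A[x]/(D)`, where `p(x) = -z(y)` and so `E` is the constant `F(-z) ∈ A`. As the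
leading coefficient of `D` is a unit, `A[x]/(D)` is again flat over `A`.
-/

section Annihilators
open nonZeroDivisors

variable {R S : Type*} [CommRing R] [CommRing S]

lemma annI_isPrincipal_map_ringEquiv_iff (e : R ≃+* S) (c : R) :
    (annI S (e c)).IsPrincipal ↔ (annI R c).IsPrincipal := by
  have hcomap : annI R c = (annI S (e c)).comap e := by
    ext r
    rw [Ideal.mem_comap, mem_annI, mem_annI, ← map_mul, map_eq_zero_iff e e.injective]
  rw [hcomap]
  refine ⟨fun h => ?_, fun _ => Ideal.IsPrincipal.of_comap e e.surjective _⟩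
  rw [← Ideal.map_symm]
  exact h.map_ringHom e.symm

lemma annI_mk_isPrincipal_iff {D c : S} :
    (annI (S ⧸ Ideal.span {D}) (Ideal.Quotient.mk _ c)).IsPrincipal ↔
      ∃ h, ∀ r, D ∣ c * r ↔ ∃ b, D ∣ r - h * b := by
  have mem_ann (r : S) : Ideal.Quotient.mk _ r ∈ annI (S ⧸ Ideal.span {D})
      (Ideal.Quotient.mk _ c) ↔ D ∣ c * r := by
    rw [mem_annI, ← map_mul, Ideal.Quotient.eq_zero_iff_dvd]
  have mem_span (h r : S) : Ideal.Quotient.mk (Ideal.span {D}) r ∈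
      Ideal.span {Ideal.Quotient.mk (Ideal.span {D}) h} ↔ ∃ b, D ∣ r - h * b := by
    rw [Ideal.mem_span_singleton, dvd_def, Ideal.Quotient.mk_surjective.exists]
    simp only [← map_mul, Ideal.Quotient.mk_eq_mk_iff_sub_mem, Ideal.mem_span_singleton]
  rw [Submodule.isPrincipal_iff, Ideal.Quotient.mk_surjective.exists]
  simp only [Ideal.submodule_span_eq, SetLike.ext_iff, Ideal.Quotient.mk_surjective.forall,
    mem_ann, mem_span]

/- A generator `h` of `(D : E)` modulo `D` comes with a relation `E * h = D * w`. As `D` can be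
cancelled, every relation `E * a = D * r` is a multiple of it up to the trivial relation
`E * D = D * E`, so `w` generates `(E : D)` modulo `E`. -/
lemma annI_mk_isPrincipal_swap {D E : S} (hD : D ∈ S⁰)
    (hE : (annI (S ⧸ Ideal.span {D}) (Ideal.Quotient.mk _ E)).IsPrincipal) :
    (annI (S ⧸ Ideal.span {E}) (Ideal.Quotient.mk _ D)).IsPrincipal := by
  obtain ⟨h, hgen⟩ := annI_mk_isPrincipal_iff.mp hE
  obtain ⟨w, hw⟩ : D ∣ E * h := (hgen h).mpr ⟨1, by simp⟩
  refine annI_mk_isPrincipal_iff.mpr ⟨w, fun r => ⟨?_, ?_⟩⟩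
  · rintro ⟨a, ha⟩
    obtain ⟨b, t, ht⟩ := (hgen a).mp ⟨r, ha.symm⟩
    refine ⟨b, t, (mul_cancel_left_mem_nonZeroDivisors hD).mp ?_⟩
    linear_combination ha + E * ht + b * hw
  · rintro ⟨b, t, ht⟩
    exact ⟨h * b + D * t, by linear_combination D * ht - b * hw⟩

lemma annI_algebraMap_of_flat [Algebra R S] [Module.Flat R S] (c : R) :
    annI S (algebraMap R S c) = (annI R c).map (algebraMap R S) := by
  refine le_antisymm (fun s hs => ?_) (Ideal.map_le_iff_le_comap.mpr fun r hr => ?_)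
  · have hrel : ∑ _i : Unit, c • s = 0 := by simpa [Algebra.smul_def] using mem_annI.mp hs
    obtain ⟨n, a, y, hsum, ha⟩ := Module.Flat.isTrivialRelation_of_sum_smul_eq_zero
      (f := fun _ : Unit => c) (x := fun _ => s) hrel
    rw [show s = ∑ j, a () j • y j from hsum ()]
    refine Ideal.sum_mem _ fun i _ => ?_
    rw [Algebra.smul_def]
    refine Ideal.mul_mem_right _ _ (Ideal.mem_map_of_mem _ (mem_annI.mpr ?_))
    simpa using ha i
  · rw [Ideal.mem_comap, mem_annI, ← map_mul, mem_annI.mp hr, map_zero]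

lemma annI_algebraMap_isPrincipal [IsPrincipalIdealRing R] [Algebra R S] [Module.Flat R S]
    (c : R) : (annI S (algebraMap R S c)).IsPrincipal := by
  rw [annI_algebraMap_of_flat]
  exact (IsPrincipalIdealRing.principal _).map_ringHom _

end Annihilators

section Purity
variable {R : Type*} [CommRing R]

lemma Hpureh_sup_Hpurev_eq_top {c d : R}
    (h : Ideal.span {c} ⊓ Ideal.span {d} = Ideal.span {c * d}) :
    Hpureh R c d ⊔ Hpurev R c d = ⊤ := by
  refine eq_top_iff.mpr fun x _ => ?_
  obtain ⟨⟨⟨f, g⟩, (hfg : c * f = d * g)⟩, rfl⟩ := Submodule.Quotient.mk_surjective _ x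
  obtain ⟨r, hr⟩ : c * d ∣ c * f := by
    rw [← Ideal.mem_span_singleton, ← h]
    exact cf_mem_inf hfg
  have hf : c * (f - d * r) = d * 0 := by linear_combination hr
  have hg : c * 0 = d * (g - c * r) := by linear_combination hfg - hr
  have hsplit : Hmk R c d (f - d * r) 0 hf + Hmk R c d 0 (g - c * r) hg = Hmk R c d f g hfg := by
    refine (Submodule.Quotient.eq _).mpr ⟨-r, ?_⟩
    ext <;> simp
  exact Submodule.mem_sup.mpr ⟨_, subset_span ⟨_, hf, rfl⟩, _, subset_span ⟨_, hg, rfl⟩, hsplit⟩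

end Purity

section AdjoinRoot
open Polynomial

variable {K A : Type*} [Field K] [CommRing A]

lemma flat_adjoinRoot_of_isUnit_leadingCoeff {D : A[X]} (hD : IsUnit D.leadingCoeff) :
    Module.Flat A (AdjoinRoot D) := by
  have hmonic : (hD.unit⁻¹ • D).Monic := monic_of_isUnit_leadingCoeff_inv_smul hD
  have := hmonic.free_adjoinRoot
  have hassoc : Associated D (hD.unit⁻¹ • D) := by
    rw [Units.smul_def, smul_eq_C_mul]
    exact associated_unit_mul_right _ _ ((hD.unit⁻¹).isUnit.map C)
  exact .of_linearEquiv (AdjoinRoot.algEquivOfAssociated A _ _ hassoc).toLinearEquiv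

lemma flat_adjoinRoot_map [Algebra K A] (f : K[X]) :
    Module.Flat A (AdjoinRoot (f.map (algebraMap K A))) := by
  rcases eq_or_ne f 0 with rfl | hf
  · rw [Polynomial.map_zero]
    have hbot : Ideal.span {(0 : A[X])} = ⊥ := Ideal.span_singleton_eq_bot.mpr rfl
    exact .of_linearEquiv
      ((Ideal.quotientEquivAlgOfEq A hbot).trans (AlgEquiv.quotientBot A A[X])).toLinearEquiv
  · refine flat_adjoinRoot_of_isUnit_leadingCoeff ?_
    nontriviality A
    rw [leadingCoeff_map]
    exact (leadingCoeff_ne_zero.mpr hf).isUnit.map _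

instance isPrincipalIdealRing_adjoinRoot (f : K[X]) : IsPrincipalIdealRing (AdjoinRoot f) :=
  .of_surjective _ (AdjoinRoot.mk_surjective (g := f))

lemma isUnit_leadingCoeff_map_add_C [Algebra K A] {p : K[X]} (hp : 0 < p.degree) (a : A) :
    IsUnit (p.map (algebraMap K A) + C a).leadingCoeff := by
  nontriviality A
  have hdeg : (C a).degree < (p.map (algebraMap K A)).degree :=
    degree_C_le.trans_lt (by rwa [degree_map])
  rw [leadingCoeff_add_of_degree_lt' hdeg, leadingCoeff_map]
  exact (leadingCoeff_ne_zero.mpr (ne_zero_of_degree_gt hp)).isUnit.map _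

lemma annI_mk_map_add_C_isPrincipal [IsPrincipalIdealRing A] [Algebra K A] {p : K[X]}
    (hp : 0 < p.degree) (F : K[X]) (a : A) :
    (annI (AdjoinRoot ((F.comp p).map (algebraMap K A)))
      (AdjoinRoot.mk _ (p.map (algebraMap K A) + C a))).IsPrincipal := by
  set D := p.map (algebraMap K A) + C a
  have hD := isUnit_leadingCoeff_map_add_C hp a
  have hp_mk : AdjoinRoot.mk D (p.map (algebraMap K A)) = algebraMap A _ (-a) := by
    rw [AdjoinRoot.algebraMap_eq, ← AdjoinRoot.mk_C, AdjoinRoot.mk_eq_mk, C_neg, sub_neg_eq_add]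
  have hconst : AdjoinRoot.mk D ((F.comp p).map (algebraMap K A)) =
      algebraMap A (AdjoinRoot D) (aeval (-a) F) := by
    rw [← AdjoinRoot.aeval_eq_of_algebra, aeval_comp, AdjoinRoot.aeval_eq_of_algebra, hp_mk,
      aeval_algebraMap_apply]
  have := flat_adjoinRoot_of_isUnit_leadingCoeff hD
  refine annI_mk_isPrincipal_swap (mem_nonZeroDivisors_of_leadingCoeff hD.mem_nonZeroDivisors) ?_
  change (annI (AdjoinRoot D) (AdjoinRoot.mk D _)).IsPrincipal
  rw [hconst]
  exact annI_algebraMap_isPrincipal _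

end AdjoinRoot

section SeparatedQuotient
open Polynomial

section Ideal
variable {ι R B : Type*} [CommRing R] [CommRing B] [Algebra R B]

/-- The ideal of `R[xᵢ : i ∈ ι]` generated by the `fᵢ(xᵢ)`. The ideal `(xˡ - 1, yᵐ - 1)` is the
case `f₀ = Xˡ - 1`, `f₁ = Xᵐ - 1` over `ι = Fin 2`. -/
noncomputable def separatedIdeal (f : ι → R[X]) : Ideal (MvPolynomial ι R) :=
  Ideal.span (Set.range fun i => aeval (MvPolynomial.X i) (f i))

lemma ideal_quotient_mk_aeval (I : Ideal B) (b : B) (p : R[X]) :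
    Ideal.Quotient.mk I (aeval b p) = aeval (Ideal.Quotient.mk I b) p :=
  (aeval_algHom_apply (Ideal.Quotient.mkₐ R I) b p).symm

lemma aeval_mk_X_eq_zero (f : ι → R[X]) (i : ι) :
    aeval (Ideal.Quotient.mk (separatedIdeal f) (MvPolynomial.X i)) (f i) = 0 := by
  rw [← ideal_quotient_mk_aeval, Ideal.Quotient.eq_zero_iff_mem]
  exact Ideal.subset_span (Set.mem_range_self i)

lemma aeval_eq_zero_of_mem_separatedIdeal {f : ι → R[X]} {x : ι → B}
    (hx : ∀ i, aeval (x i) (f i) = 0) {q : MvPolynomial ι R} (hq : q ∈ separatedIdeal f) :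
    MvPolynomial.aeval x q = 0 := by
  have hle : separatedIdeal f ≤ RingHom.ker (MvPolynomial.aeval (R := R) x) := by
    refine Ideal.span_le.mpr (Set.range_subset_iff.mpr fun i => ?_)
    rw [SetLike.mem_coe, RingHom.mem_ker, ← aeval_algHom_apply, MvPolynomial.aeval_X, hx]
  exact hle hq

end Ideal

section Equiv
variable {R : Type*} [CommRing R]

/-- The quotient `R[xⱼ, xᵢ] / (fⱼ(xⱼ), fᵢ(xᵢ))` formed one variable at a time. -/
abbrev IteratedAdjoinRoot (f : Fin 2 → R[X]) (i j : Fin 2) : Type _ :=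
  AdjoinRoot ((f i).map (algebraMap R (AdjoinRoot (f j))))

/-- The map from the quotient of the bivariate polynomial ring to the iterated one. -/
noncomputable def toIteratedAdjoinRoot (f : Fin 2 → R[X]) {i j : Fin 2} (hij : i ≠ j) :
    (MvPolynomial (Fin 2) R ⧸ separatedIdeal f) →ₐ[R] IteratedAdjoinRoot f i j :=
  Ideal.Quotient.liftₐ _
    (MvPolynomial.aeval fun k =>
      if k = i then AdjoinRoot.root _ else algebraMap (AdjoinRoot (f j)) _ (AdjoinRoot.root _))
    fun _ => aeval_eq_zero_of_mem_separatedIdeal fun k => by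
      obtain rfl | rfl : k = i ∨ k = j := by grind
      · rw [if_pos rfl, AdjoinRoot.aeval_eq_of_algebra, AdjoinRoot.mk_self]
      · rw [if_neg hij.symm, aeval_algebraMap_apply, AdjoinRoot.aeval_eq, AdjoinRoot.mk_self,
          map_zero]

lemma toIteratedAdjoinRoot_mk_X_left (f : Fin 2 → R[X]) {i j : Fin 2} (hij : i ≠ j) :
    toIteratedAdjoinRoot f hij (Ideal.Quotient.mk _ (MvPolynomial.X i)) = AdjoinRoot.root _ :=
  (MvPolynomial.aeval_X _ _).trans (if_pos rfl)

lemma toIteratedAdjoinRoot_mk_X_right (f : Fin 2 → R[X]) {i j : Fin 2} (hij : i ≠ j) :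
    toIteratedAdjoinRoot f hij (Ideal.Quotient.mk _ (MvPolynomial.X j)) =
      algebraMap (AdjoinRoot (f j)) _ (AdjoinRoot.root _) :=
  (MvPolynomial.aeval_X _ _).trans (if_neg hij.symm)

/-- The map from the iterated quotient to the quotient of the bivariate polynomial ring. -/
noncomputable def ofIteratedAdjoinRoot (f : Fin 2 → R[X]) (i j : Fin 2) :
    IteratedAdjoinRoot f i j →ₐ[R] (MvPolynomial (Fin 2) R ⧸ separatedIdeal f) :=
  AdjoinRoot.liftAlgHom _
    (AdjoinRoot.liftAlgHom _ (Algebra.ofId R _)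
      (Ideal.Quotient.mk _ (MvPolynomial.X j)) (aeval_mk_X_eq_zero f j))
    (Ideal.Quotient.mk _ (MvPolynomial.X i)) <| by
      refine (eval₂_map ..).trans ?_
      convert aeval_mk_X_eq_zero f i
      rw [aeval_def]
      congr 1
      exact AlgHom.comp_algebraMap _

lemma ofIteratedAdjoinRoot_root (f : Fin 2 → R[X]) (i j : Fin 2) :
    ofIteratedAdjoinRoot f i j (AdjoinRoot.root _) = Ideal.Quotient.mk _ (MvPolynomial.X i) :=
  AdjoinRoot.liftAlgHom_root ..

lemma ofIteratedAdjoinRoot_algebraMap_root (f : Fin 2 → R[X]) (i j : Fin 2) :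
    ofIteratedAdjoinRoot f i j (algebraMap (AdjoinRoot (f j)) _ (AdjoinRoot.root _)) =
      Ideal.Quotient.mk _ (MvPolynomial.X j) :=
  (AdjoinRoot.liftAlgHom_of ..).trans (AdjoinRoot.liftAlgHom_root ..)

/-- The bivariate quotient as an iterated one, with `xⱼ` adjoined before `xᵢ`. -/
noncomputable def separatedQuotientEquiv (f : Fin 2 → R[X]) {i j : Fin 2} (hij : i ≠ j) :
    (MvPolynomial (Fin 2) R ⧸ separatedIdeal f) ≃ₐ[R] IteratedAdjoinRoot f i j :=
  AlgEquiv.ofAlgHom (toIteratedAdjoinRoot f hij) (ofIteratedAdjoinRoot f i j)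
    (by
      refine AdjoinRoot.algHom_ext' (AdjoinRoot.algHom_ext ?_) ?_
      · exact (congrArg _ (ofIteratedAdjoinRoot_algebraMap_root f i j)).trans
          (toIteratedAdjoinRoot_mk_X_right f hij)
      · exact (congrArg _ (ofIteratedAdjoinRoot_root f i j)).trans
          (toIteratedAdjoinRoot_mk_X_left f hij))
    (by
      refine Ideal.Quotient.algHom_ext _ (MvPolynomial.algHom_ext fun k => ?_)
      obtain rfl | rfl : k = i ∨ k = j := by grind
      · exact (congrArg _ (toIteratedAdjoinRoot_mk_X_left f hij)).trans
          (ofIteratedAdjoinRoot_root ..)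
      · exact (congrArg _ (toIteratedAdjoinRoot_mk_X_right f hij)).trans
          (ofIteratedAdjoinRoot_algebraMap_root ..))

lemma separatedQuotientEquiv_mk_aeval_X_left (f : Fin 2 → R[X]) {i j : Fin 2} (hij : i ≠ j)
    (p : R[X]) : separatedQuotientEquiv f hij (Ideal.Quotient.mk _ (aeval (MvPolynomial.X i) p)) =
      AdjoinRoot.mk _ (p.map (algebraMap R _)) := by
  rw [ideal_quotient_mk_aeval, ← aeval_algHom_apply, ← AdjoinRoot.aeval_eq_of_algebra]
  exact congrArg (aeval · p) (toIteratedAdjoinRoot_mk_X_left f hij)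

lemma separatedQuotientEquiv_mk_aeval_X_right (f : Fin 2 → R[X]) {i j : Fin 2} (hij : i ≠ j)
    (p : R[X]) : separatedQuotientEquiv f hij (Ideal.Quotient.mk _ (aeval (MvPolynomial.X j) p)) =
      algebraMap (AdjoinRoot (f j)) _ (AdjoinRoot.mk _ p) := by
  rw [ideal_quotient_mk_aeval, ← aeval_algHom_apply, ← AdjoinRoot.aeval_eq,
    ← aeval_algebraMap_apply]
  exact congrArg (aeval · p) (toIteratedAdjoinRoot_mk_X_right f hij)

end Equiv

variable {K : Type*} [Field K]

/-- The class of a univariate polynomial, or of a sum `p(xᵢ) + z(xⱼ)` for which `fᵢ` decomposes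
as `F ∘ p`. The semiperiodic elements are those with `p = Xᵏ`, as then
`Xᵏᵏ' - 1 = (Xᵏ' - 1) ∘ Xᵏ`. The ideal `I` stands for `separatedIdeal f`. -/
def IsUniOrDecomposable (f : Fin 2 → K[X]) {I : Ideal (MvPolynomial (Fin 2) K)}
    (c : MvPolynomial (Fin 2) K ⧸ I) : Prop :=
  (∃ (i : Fin 2) (p : K[X]), c = Ideal.Quotient.mk I (aeval (MvPolynomial.X i) p)) ∨
  ∃ (i j : Fin 2) (p F z : K[X]), i ≠ j ∧ f i = F.comp p ∧
    c = Ideal.Quotient.mk I (aeval (MvPolynomial.X i) p + aeval (MvPolynomial.X j) z)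

lemma annI_mk_aeval_X_isPrincipal (f : Fin 2 → K[X]) (j : Fin 2) (p : K[X]) :
    (annI (_ ⧸ separatedIdeal f)
      (Ideal.Quotient.mk _ (aeval (MvPolynomial.X j) p))).IsPrincipal := by
  obtain ⟨i, hij⟩ := exists_ne j
  have := flat_adjoinRoot_map (A := AdjoinRoot (f j)) (f i)
  rw [← annI_isPrincipal_map_ringEquiv_iff (separatedQuotientEquiv f hij).toRingEquiv,
    AlgEquiv.coe_ringEquiv, separatedQuotientEquiv_mk_aeval_X_right]
  exact annI_algebraMap_isPrincipal _

lemma annI_mk_aeval_X_add_aeval_X_isPrincipal {f : Fin 2 → K[X]} {i j : Fin 2} (hij : i ≠ j)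
    {p F : K[X]} (hF : f i = F.comp p) (z : K[X]) :
    (annI (_ ⧸ separatedIdeal f) (Ideal.Quotient.mk _
      (aeval (MvPolynomial.X i) p + aeval (MvPolynomial.X j) z))).IsPrincipal := by
  rcases lt_or_ge 0 p.degree with hp | hp
  · rw [← annI_isPrincipal_map_ringEquiv_iff (separatedQuotientEquiv f hij).toRingEquiv,
      AlgEquiv.coe_ringEquiv, map_add, map_add,
      separatedQuotientEquiv_mk_aeval_X_left, separatedQuotientEquiv_mk_aeval_X_right]
    have := annI_mk_map_add_C_isPrincipal hp F (AdjoinRoot.mk (f j) z)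
    rw [← hF, map_add, AdjoinRoot.mk_C] at this
    exact this
  · obtain ⟨a, rfl⟩ : ∃ a, p = C a := ⟨_, eq_C_of_degree_le_zero hp⟩
    rw [aeval_C, ← aeval_C (MvPolynomial.X j), ← map_add]
    exact annI_mk_aeval_X_isPrincipal f j _

lemma IsUniOrDecomposable.annI_isPrincipal {f : Fin 2 → K[X]}
    {c : MvPolynomial (Fin 2) K ⧸ separatedIdeal f} (hc : IsUniOrDecomposable f c) :
    (annI _ c).IsPrincipal := by
  obtain ⟨i, p, rfl⟩ | ⟨i, j, p, F, z, hij, hF, rfl⟩ := hc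
  · exact annI_mk_aeval_X_isPrincipal f i p
  · exact annI_mk_aeval_X_add_aeval_X_isPrincipal hij hF z

end SeparatedQuotient

theorem stmt17_general {K : Type*} [Field K] {f : Fin 2 → Polynomial K}
    {I : Ideal (MvPolynomial (Fin 2) K)} (hI : I = separatedIdeal f) :
    (∀ c : MvPolynomial (Fin 2) K ⧸ I, IsUniOrDecomposable f c → (annI _ c).IsPrincipal) ∧
    (∀ c d : MvPolynomial (Fin 2) K ⧸ I, IsUniOrDecomposable f c → IsUniOrDecomposable f d →
      Ideal.span {c} ⊓ Ideal.span {d} = Ideal.span {c * d} →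
      Hpureh _ c d ⊔ Hpurev _ c d = ⊤ ∧ (annI _ c).IsPrincipal ∧ (annI _ d).IsPrincipal) := by
  subst hI
  exact ⟨fun _ hc => hc.annI_isPrincipal, fun _ _ hc hd hcd =>
    ⟨Hpureh_sup_Hpurev_eq_top hcd, hc.annI_isPrincipal, hd.annI_isPrincipal⟩⟩

section BivariateBicycle
open Polynomial

lemma BBIdeal_eq_separatedIdeal (l m : ℕ) :
    BBIdeal l m = separatedIdeal ![X ^ l - 1, X ^ m - 1] := by
  refine congrArg Ideal.span (Set.ext fun q => ?_)
  simp [Fin.exists_fin_two, eq_comm]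

lemma X_pow_mul_sub_one_eq_comp {R : Type*} [CommRing R] (k k' : ℕ) :
    (X ^ (k * k') - 1 : R[X]) = (X ^ k' - 1 : R[X]).comp (X ^ k) := by
  simp [pow_mul]

lemma IsUniOrSemiperiodic.isUniOrDecomposable {l m : ℕ} {c : BBRing l m}
    (hc : IsUniOrSemiperiodic l m c) :
    IsUniOrDecomposable ![X ^ l - 1, X ^ m - 1] c := by
  obtain ⟨p, hp⟩ | ⟨p, hp⟩ | ⟨k, k', z, -, -, rfl, hc⟩ | ⟨k, k', z, -, -, rfl, hc⟩ := hc
  · exact .inl ⟨0, p, hp⟩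
  · exact .inl ⟨1, p, hp⟩
  · exact .inr ⟨0, 1, X ^ k, X ^ k' - 1, z, zero_ne_one, X_pow_mul_sub_one_eq_comp k k',
      by rw [hc, aeval_X_pow]⟩
  · exact .inr ⟨1, 0, X ^ k, X ^ k' - 1, z, one_ne_zero, X_pow_mul_sub_one_eq_comp k k',
      by rw [hc, aeval_X_pow]⟩

end BivariateBicycle

set_option synthInstance.maxHeartbeats 1000000 in
/-- If `c` is univariate or semiperiodic then `ann(c)` is principal; consequently
a pure bivariate bicycle code with `c, d` each univariate or semiperiodic is
principal (pure with `ann(c)`, `ann(d)` principal ideals). -/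
theorem stmt17 (l m : ℕ) (hl : 0 < l) (hm : 0 < m) :
    (∀ c : BBRing l m, IsUniOrSemiperiodic l m c →
      (annI (BBRing l m) c).IsPrincipal) ∧
    (∀ c d : BBRing l m, IsUniOrSemiperiodic l m c → IsUniOrSemiperiodic l m d →
      Ideal.span {c} ⊓ Ideal.span {d} = Ideal.span {c * d} →
      (Hpureh (BBRing l m) c d ⊔ Hpurev (BBRing l m) c d = ⊤ ∧
       (annI (BBRing l m) c).IsPrincipal ∧ (annI (BBRing l m) d).IsPrincipal)) := by
  have hI := BBIdeal_eq_separatedIdeal l m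
  exact ⟨fun c hc => (stmt17_general hI).1 c hc.isUniOrDecomposable, fun c d hc hd =>
    (stmt17_general hI).2 c d hc.isUniOrDecomposable hd.isUniOrDecomposable⟩
end
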